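/- Let n ≥ 2 and parametrize S^{n-1} by ω = (θ, φ) with θ ∈ [0, π] the polar angle (so S^{n-1}_+ corresponds to θ < π/2). For the function v(θ, φ) = cos²θ on S^{n-1}_+ (which together with its gradient vanishes on the equator θ = π/2), equality holds in the spectral inequality: ∫_{S^{n-1}_+} |δ_ω v|² dω = 2n ∫_{S^{n-1}_+} |∇_ω v|² dω. -/

import Mathlib

open MeasureTheory Metric Set Filter
open scoped Topology RealInnerProductSpace NNReal ENNReal

noncomputable section

/-- `ℝⁿ` with the Euclidean structure. -/
abbrev Euc (n : ℕ) := EuclideanSpace ℝ (Fin n)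

/-- Pointwise Laplacian of `u : ℝⁿ → ℝ`. -/
def lap {n : ℕ} (u : Euc n → ℝ) (x : Euc n) : ℝ :=
  ∑ i : Fin n, fderiv ℝ (fun y => fderiv ℝ u y (EuclideanSpace.single i 1)) x
    (EuclideanSpace.single i 1)

/-- The last coordinate `x_n` of `x ∈ ℝⁿ`. -/
def lastCoord {n : ℕ} (x : Euc n) : ℝ := if h : 0 < n then x ⟨n - 1, by omega⟩ else 0

/-- The open upper half-sphere `S^{n-1}_+ = S^{n-1} ∩ {x_n > 0}`. -/
def halfSphere (n : ℕ) : Set (Euc n) := {x | ‖x‖ = 1 ∧ 0 < lastCoord x}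

/-- A function on the sphere `S^{n-1}`, represented by its `0`-homogeneous extension
to `ℝⁿ \ {0}`. -/
def IsHomog {n : ℕ} (v : Euc n → ℝ) : Prop :=
  ∀ x : Euc n, x ≠ 0 → ∀ c : ℝ, 0 < c → v (c • x) = v x

/-- A function in `C₀^∞(Γ)` for `Γ` relatively open in `S^{n-1}`: smooth on the sphere and
supported in a (relatively) compact subset of `Γ`; represented `0`-homogeneously. -/
def IsSphTest {n : ℕ} (Γ : Set (Euc n)) (ψ : Euc n → ℝ) : Prop :=
  IsHomog ψ ∧ ContDiffOn ℝ (⊤ : ℕ∞) ψ {(0 : Euc n)}ᶜ ∧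
    closure {ω | ‖ω‖ = 1 ∧ ψ ω ≠ 0} ⊆ Γ

/-- The surface measure `dω` on `S^{n-1} ⊆ ℝⁿ`: `(n-1)`-dimensional Hausdorff measure. -/
def sphMeasure (n : ℕ) : Measure (Euc n) := μH[(n : ℝ) - 1]

/-- `v ∈ ˚W₂¹(Γ)`: limit of `C₀^∞(Γ)` functions in the `W₂¹` norm
(`v` is identified with its pointwise `0`-homogeneous representative). -/
def MemW21Sph0 {n : ℕ} (Γ : Set (Euc n)) (v : Euc n → ℝ) : Prop :=
  IsHomog v ∧ ∃ ψ : ℕ → Euc n → ℝ, (∀ k, IsSphTest Γ (ψ k)) ∧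
    Tendsto (fun k => ∫ ω in Γ,
        ((ψ k ω - v ω) ^ 2 + ‖gradient (ψ k) ω - gradient v ω‖ ^ 2) ∂(sphMeasure n))
      atTop (𝓝 0)

/-- `v ∈ ˚W₂²(Γ)`: limit of `C₀^∞(Γ)` functions in the `W₂²` norm
(`v` is identified with its pointwise `0`-homogeneous representative). -/
def MemW22Sph0 {n : ℕ} (Γ : Set (Euc n)) (v : Euc n → ℝ) : Prop :=
  IsHomog v ∧ ∃ ψ : ℕ → Euc n → ℝ, (∀ k, IsSphTest Γ (ψ k)) ∧
    Tendsto (fun k => ∫ ω in Γ,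
        ((ψ k ω - v ω) ^ 2 + ‖gradient (ψ k) ω - gradient v ω‖ ^ 2
          + (lap (ψ k) ω - lap v ω) ^ 2) ∂(sphMeasure n))
      atTop (𝓝 0)

/-- `v ∈ W₂¹(Γ)` (no boundary condition): limit in `W₂¹(Γ)` of functions smooth on the
sphere. -/
def MemW21Sph {n : ℕ} (Γ : Set (Euc n)) (v : Euc n → ℝ) : Prop :=
  IsHomog v ∧ ∃ ψ : ℕ → Euc n → ℝ,
    (∀ k, IsHomog (ψ k) ∧ ContDiffOn ℝ (⊤ : ℕ∞) (ψ k) {(0 : Euc n)}ᶜ) ∧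
    Tendsto (fun k => ∫ ω in Γ,
        ((ψ k ω - v ω) ^ 2 + ‖gradient (ψ k) ω - gradient v ω‖ ^ 2) ∂(sphMeasure n))
      atTop (𝓝 0)


def faceZ {m : ℕ} (i : Fin (m+1)) (s : ℝ) (y : Fin m → ℝ) : Euc (m+1) :=
  WithLp.toLp 2 (i.insertNth (α := fun _ => ℝ) s y)

def faceG {m : ℕ} (i : Fin (m+1)) (s : ℝ) (y : Fin m → ℝ) : Euc (m+1) :=
  ‖faceZ i s y‖⁻¹ • faceZ i s y

lemma faceZ_dist {m : ℕ} (i : Fin (m+1)) (s : ℝ) (y y' : Fin m → ℝ) :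
    ‖faceZ i s y - faceZ i s y'‖ ≤ (m : ℝ) * ‖y - y'‖ := by
  rw [EuclideanSpace.norm_eq]
  apply Real.sqrt_le_iff.2
  refine ⟨by positivity, ?_⟩
  rw [Fin.sum_univ_succAbove _ i]
  simp only [faceZ, PiLp.sub_apply, Fin.insertNth_apply_same, sub_self, norm_zero,
    Fin.insertNth_apply_succAbove]
  have h : ∀ j : Fin m, ‖y j - y' j‖ ^ 2 ≤ ‖y - y'‖ ^ 2 := fun j => by
    have := norm_le_pi_norm (y - y') j
    simp only [Pi.sub_apply] at this
    gcongr
  calc _ ≤ (0:ℝ)^2 + ∑ j : Fin m, ‖y - y'‖ ^ 2 := add_le_add le_rfl (Finset.sum_le_sum fun j _ => h j)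
    _ = m * ‖y - y'‖ ^ 2 := by simp
    _ ≤ _ := by
      rw [mul_pow]; gcongr
      have : (m : ℝ) = 0 ∨ (1:ℝ) ≤ m := by
        rcases m with _ | m
        · simp
        · right; push_cast; linarith [(Nat.cast_nonneg m : (0:ℝ) ≤ m)]
      rcases this with h | h
      · rw [h]; norm_num
      · nlinarith

lemma one_le_faceZ {m : ℕ} (i : Fin (m+1)) (s : ℝ) (hs : |s| = 1) (y : Fin m → ℝ) :
    1 ≤ ‖faceZ i s y‖ := by
  have := PiLp.norm_apply_le (faceZ i s y) i
  simpa [faceZ, hs] using this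

lemma faceG_lip {m : ℕ} (i : Fin (m+1)) (s : ℝ) (hs : |s| = 1) :
    LipschitzWith (2 * m : ℝ≥0) (faceG i s) := by
  apply LipschitzWith.of_dist_le_mul
  intro y y'
  rw [dist_eq_norm, dist_eq_norm]
  have h1 := one_le_faceZ i s hs y
  have h2 := one_le_faceZ i s hs y'
  have h3 := faceZ_dist i s y y'
  unfold faceG
  set z := faceZ i s y
  set z' := faceZ i s y'
  have e : ‖z‖⁻¹ • z - ‖z'‖⁻¹ • z' = ‖z‖⁻¹ • (z - z') + (‖z‖⁻¹ - ‖z'‖⁻¹) • z' := by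
    rw [smul_sub, sub_smul]; abel
  have e2 : |‖z‖⁻¹ - ‖z'‖⁻¹| * ‖z'‖ = ‖z‖⁻¹ * |‖z'‖ - ‖z‖| := by
    have : ‖z‖⁻¹ - ‖z'‖⁻¹ = ‖z‖⁻¹ * ‖z'‖⁻¹ * (‖z'‖ - ‖z‖) := by
      field_simp
    rw [this, abs_mul, abs_of_nonneg (by positivity)]
    field_simp
  have h4 : |‖z'‖ - ‖z‖| ≤ ‖z - z'‖ := by
    rw [norm_sub_rev]; exact abs_norm_sub_norm_le _ _
  have h5 : ‖z‖⁻¹ ≤ 1 := inv_le_one_of_one_le₀ h1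
  rw [e]
  calc _ ≤ ‖‖z‖⁻¹ • (z - z')‖ + ‖(‖z‖⁻¹ - ‖z'‖⁻¹) • z'‖ := norm_add_le _ _
    _ = ‖z‖⁻¹ * ‖z - z'‖ + ‖z‖⁻¹ * |‖z'‖ - ‖z‖| := by
      rw [norm_smul, norm_smul, Real.norm_eq_abs (_ - _), e2]; simp
    _ ≤ 1 * ‖z - z'‖ + 1 * ‖z - z'‖ := by gcongr
    _ ≤ _ := by push_cast; linarith

lemma faceG_measure {m : ℕ} (i : Fin (m+1)) (s : ℝ) (hs : |s| = 1) (D : Set (Fin m → ℝ)) :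
    sphMeasure (m+1) (faceG i s '' D) ≤ ((2 * m : ℝ≥0) : ℝ≥0∞) ^ (m:ℝ) * volume D := by
  have := (faceG_lip i s hs).hausdorffMeasure_image_le (d := (m:ℝ)) (by positivity) D
  have h2 : (μH[(m:ℝ)] : Measure (Fin m → ℝ)) = volume := by
    have := hausdorffMeasure_pi_real (ι := Fin m)
    simpa using this
  rw [h2] at this
  unfold sphMeasure
  simpa using this

lemma sphere_cover {m : ℕ} (x : Euc (m+1)) (hx : ‖x‖ = 1) :
    ∃ i : Fin (m+1), ∃ s : ℝ, (s = 1 ∨ s = -1) ∧ x i ≠ 0 ∧ ∃ y : Fin m → ℝ,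
      (∀ j, |y j| ≤ 1) ∧ (∀ j, x (i.succAbove j) = 0 → y j = 0) ∧ faceG i s y = x := by
  obtain ⟨i, hi⟩ := Finite.exists_max (fun i => |x i|)
  have hi0 : x i ≠ 0 := by
    intro h0
    have : x = 0 := by
      ext j
      have := hi j
      simp only [h0, abs_zero] at this
      simpa using this
    rw [this] at hx; simp at hx
  have hc : 0 < |x i| := abs_pos.2 hi0
  refine ⟨i, x i / |x i|, ?_, hi0, fun j => |x i|⁻¹ * x (i.succAbove j), ?_, ?_, ?_⟩
  · rcases abs_choice (x i) with h | h <;> rw [h]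
    · left; field_simp
    · right; field_simp
  · intro j
    rw [abs_mul, abs_inv, abs_abs, inv_mul_le_iff₀ hc, mul_one]
    exact hi _
  · intro j hj; simp [hj]
  · have : faceZ i (x i / |x i|) (fun j => |x i|⁻¹ * x (i.succAbove j)) = |x i|⁻¹ • x := by
      ext j
      rcases Fin.eq_self_or_eq_succAbove i j with h | ⟨k, h⟩
      · subst h; simp [faceZ, div_eq_inv_mul]
      · subst h; simp [faceZ]
    rw [faceG, this, norm_smul, hx]
    simp only [norm_inv, Real.norm_eq_abs, abs_abs, mul_one, inv_inv, smul_smul]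
    rw [mul_inv_cancel₀ hc.ne', one_smul]

lemma sphere_finite (m : ℕ) : sphMeasure (m+1) {x | ‖x‖ = 1} < ⊤ := by
  have hsub : {x : Euc (m+1) | ‖x‖ = 1} ⊆ (⋃ i : Fin (m+1),
      (faceG i 1 '' (Set.Icc (fun _ => -1) (fun _ => 1)) ∪
       faceG i (-1) '' (Set.Icc (fun _ => -1) (fun _ => 1)))) := by
    intro x hx
    obtain ⟨i, s, hs, -, y, hy, -, hG⟩ := sphere_cover x hx
    have hy' : y ∈ Set.Icc (fun _ : Fin m => (-1:ℝ)) (fun _ => 1) :=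
      ⟨fun j => (abs_le.1 (hy j)).1, fun j => (abs_le.1 (hy j)).2⟩
    refine Set.mem_iUnion.2 ⟨i, ?_⟩
    rcases hs with rfl | rfl
    · exact Or.inl ⟨y, hy', hG⟩
    · exact Or.inr ⟨y, hy', hG⟩
  have hv : volume (Set.Icc (fun _ : Fin m => (-1:ℝ)) (fun _ => 1)) < ⊤ :=
    isCompact_Icc.measure_lt_top
  have hK : ((2 * m : ℝ≥0) : ℝ≥0∞) ^ (m:ℝ) < ⊤ :=
    ENNReal.rpow_lt_top_of_nonneg (by positivity) ENNReal.coe_ne_top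
  refine lt_of_le_of_lt (measure_mono hsub) (lt_of_le_of_lt (measure_iUnion_le _) ?_)
  rw [tsum_fintype]
  refine ENNReal.sum_lt_top.2 fun i _ => ?_
  refine lt_of_le_of_lt (measure_union_le _ _) (ENNReal.add_lt_top.2 ⟨?_, ?_⟩)
  · exact lt_of_le_of_lt (faceG_measure i 1 (by simp) _) (ENNReal.mul_lt_top hK hv)
  · exact lt_of_le_of_lt (faceG_measure i (-1) (by simp) _) (ENNReal.mul_lt_top hK hv)

lemma equator_null (m : ℕ) :
    sphMeasure (m+1) {x | ‖x‖ = 1 ∧ x (Fin.last m) = 0} = 0 := by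
  have hsub : {x : Euc (m+1) | ‖x‖ = 1 ∧ x (Fin.last m) = 0} ⊆ (⋃ i : Fin (m+1), ⋃ j : Fin m,
      (faceG i 1 '' {y | y j = 0} ∪ faceG i (-1) '' {y | y j = 0})) := by
    rintro x ⟨hx, hl⟩
    obtain ⟨i, s, hs, hi, y, hy, hy0, hG⟩ := sphere_cover x hx
    have : Fin.last m ≠ i := by rintro rfl; exact hi hl
    obtain ⟨j, hj⟩ := Fin.exists_succAbove_eq this
    have hyj : y j = 0 := hy0 j (by rw [hj, hl])
    refine Set.mem_iUnion.2 ⟨i, Set.mem_iUnion.2 ⟨j, ?_⟩⟩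
    rcases hs with rfl | rfl
    · exact Or.inl ⟨y, hyj, hG⟩
    · exact Or.inr ⟨y, hyj, hG⟩
  refine measure_mono_null hsub (measure_iUnion_null fun i => measure_iUnion_null fun j => ?_)
  have hv : volume {y : Fin m → ℝ | y j = 0} = 0 :=
    Measure.pi_hyperplane (fun _ : Fin m => (volume : Measure ℝ)) j 0
  refine measure_union_null ?_ ?_
  · have := faceG_measure i 1 (by simp) {y | y j = 0}
    rw [hv, mul_zero] at this; exact le_antisymm this bot_le
  · have := faceG_measure i (-1) (by simp) {y | y j = 0}
    rw [hv, mul_zero] at this; exact le_antisymm this bot_le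

def sphS (m : ℕ) : Measure (Euc (m+1)) := (sphMeasure (m+1)).restrict {x | ‖x‖ = 1}

instance (m : ℕ) : IsFiniteMeasure (sphS m) :=
  ⟨by rw [sphS, Measure.restrict_apply_univ]; exact sphere_finite m⟩

lemma sphere_meas (m : ℕ) : MeasurableSet {x : Euc (m+1) | ‖x‖ = 1} :=
  (isClosed_eq continuous_norm continuous_const).measurableSet

lemma sphS_ae (m : ℕ) : ∀ᵐ x ∂(sphS m), ‖x‖ = 1 := ae_restrict_mem (sphere_meas m)

lemma sphS_int {m : ℕ} {f : Euc (m+1) → ℝ} (hf : Continuous f) : Integrable f (sphS m) := by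
  obtain ⟨C, hC⟩ := (isCompact_sphere (0 : Euc (m+1)) 1).exists_bound_of_continuousOn
    hf.continuousOn
  refine Integrable.of_bound hf.aestronglyMeasurable C ?_
  filter_upwards [sphS_ae m] with x hx
  exact hC x (by simpa using hx)

lemma sphS_inv {m : ℕ} (e : Euc (m+1) ≃ₗᵢ[ℝ] Euc (m+1)) (f : Euc (m+1) → ℝ) :
    ∫ x, f (e x) ∂(sphS m) = ∫ x, f x ∂(sphS m) := by
  have h := (IsometryEquiv.measurePreserving_hausdorffMeasure e.toIsometryEquiv
    (((m+1 : ℕ) : ℝ) - 1)).setIntegral_preimage_emb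
    e.toIsometryEquiv.toHomeomorph.measurableEmbedding f {x | ‖x‖ = 1}
  have hp : e.toIsometryEquiv ⁻¹' {x | ‖x‖ = 1} = {x | ‖x‖ = 1} := by
    ext x; simp
  rw [hp] at h
  exact h

lemma sphS_inner {m : ℕ} (u w : Euc (m+1)) (h : ‖u‖ = ‖w‖) (F : ℝ → ℝ) :
    ∫ x, F (inner ℝ u x) ∂(sphS m) = ∫ x, F (inner ℝ w x) ∂(sphS m) := by
  have hr := Submodule.reflection_sub h
  set R := Submodule.reflection (Submodule.span ℝ {u - w})ᗮ
  rw [← sphS_inv R (fun x => F (inner ℝ w x))]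
  congr 1; ext x
  rw [← hr, R.inner_map_map]

abbrev eb {m : ℕ} (i : Fin (m+1)) : Euc (m+1) := EuclideanSpace.single i 1

lemma inner_eb {m : ℕ} (i : Fin (m+1)) (x : Euc (m+1)) : inner ℝ (eb i) x = x i := by
  simp [eb, EuclideanSpace.inner_single_left]

lemma cont_coord {m : ℕ} (i : Fin (m+1)) : Continuous (fun x : Euc (m+1) => x i) := by fun_prop

lemma m2_eq {m : ℕ} (i j : Fin (m+1)) (k : ℕ) :
    ∫ x, (x i) ^ k ∂(sphS m) = ∫ x, (x j) ^ k ∂(sphS m) := by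
  have := sphS_inner (eb i) (eb j) (by simp [eb]) (fun t => t ^ k)
  simpa only [inner_eb] using this

lemma norm_sq_add {m : ℕ} {i j : Fin (m+1)} (h : i ≠ j) (c : ℝ) (hc : c ^ 2 = 1) :
    ‖eb i + c • eb j‖ = ‖(√2 : ℝ) • eb i‖ := by
  have h1 : ‖eb i + c • eb j‖ ^ 2 = 2 := by
    rw [norm_add_sq_real, real_inner_smul_right, inner_eb, norm_smul, mul_pow]
    simp [eb, h, hc]; norm_num
  have h2 : ‖(√2 : ℝ) • eb i‖ ^ 2 = 2 := by
    rw [norm_smul, mul_pow]; simp [eb]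
  exact (sq_eq_sq₀ (norm_nonneg _) (norm_nonneg _)).1 (h1.trans h2.symm)

lemma m22 {m : ℕ} {i j : Fin (m+1)} (h : i ≠ j) :
    ∫ x, (x i) ^ 2 * (x j) ^ 2 ∂(sphS m) = (∫ x, (x i) ^ 4 ∂(sphS m)) / 3 := by
  have hs : (√2 : ℝ) ^ 4 = 4 := by
    rw [show 4 = 2 * 2 from rfl, pow_mul, Real.sq_sqrt (by norm_num)]; norm_num
  have key : ∀ c : ℝ, c ^ 2 = 1 → ∫ x, (x i + c * x j) ^ 4 ∂(sphS m)
      = 4 * ∫ x, (x i) ^ 4 ∂(sphS m) := by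
    intro c hc
    have := sphS_inner _ _ (norm_sq_add h c hc) (fun t => t ^ 4)
    simp only [inner_add_left, real_inner_smul_left, inner_eb, mul_pow, hs] at this
    rw [this, integral_const_mul]
  have k1 := key 1 (by norm_num)
  have k2 := key (-1) (by norm_num)
  have hj := m2_eq (m := m) j i 4
  have hsum : ∫ x, ((x i + 1 * x j) ^ 4 + (x i + (-1) * x j) ^ 4) ∂(sphS m)
      = ∫ x, (2 * (x i) ^ 4 + 2 * (x j) ^ 4 + 12 * ((x i) ^ 2 * (x j) ^ 2)) ∂(sphS m) := by
    congr 1; ext x; ring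
  rw [integral_add (sphS_int (by fun_prop)) (sphS_int (by fun_prop)),
    integral_add (sphS_int (by fun_prop)) (sphS_int (by fun_prop)),
    integral_add (sphS_int (by fun_prop)) (sphS_int (by fun_prop)),
    integral_const_mul, integral_const_mul, integral_const_mul, k1, k2, hj] at hsum
  linarith

lemma sum_sq {m : ℕ} {x : Euc (m+1)} (hx : ‖x‖ = 1) : ∑ i, (x i) ^ 2 = 1 := by
  have := EuclideanSpace.real_norm_sq_eq x
  rw [← this, hx]; norm_num

lemma m2 {m : ℕ} (i : Fin (m+1)) :
    ((m:ℝ)+1) * ∫ x, (x i) ^ 2 ∂(sphS m) = ∫ x, (1:ℝ) ∂(sphS m) := by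
  have : ∫ x, (1:ℝ) ∂(sphS m) = ∫ x, ∑ j, (x j) ^ 2 ∂(sphS m) := by
    apply integral_congr_ae
    filter_upwards [sphS_ae m] with x hx
    rw [sum_sq hx]
  rw [this, integral_finsetSum _ (fun j _ => sphS_int (by fun_prop)),
    Finset.sum_congr rfl (fun j _ => m2_eq j i 2)]
  simp

lemma m4 {m : ℕ} (i : Fin (m+1)) :
    ∫ x, (x i) ^ 2 ∂(sphS m) = ((m:ℝ)+3) / 3 * ∫ x, (x i) ^ 4 ∂(sphS m) := by
  have : ∫ x, (x i) ^ 2 ∂(sphS m) = ∫ x, ∑ j, (x i) ^ 2 * (x j) ^ 2 ∂(sphS m) := by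
    apply integral_congr_ae
    filter_upwards [sphS_ae m] with x hx
    rw [← Finset.mul_sum, sum_sq hx, mul_one]
  rw [this, integral_finsetSum _ (fun j _ => sphS_int (by fun_prop)),
    Fin.sum_univ_succAbove _ i,
    Finset.sum_congr rfl (fun j _ => m22 (Fin.succAbove_ne i j).symm)]
  have e : ∫ x, (x i) ^ 2 * (x i) ^ 2 ∂(sphS m) = ∫ x, (x i) ^ 4 ∂(sphS m) := by
    congr 1; ext x; ring
  rw [e]; simp; ring

lemma total_zero {m : ℕ} (i : Fin (m+1)) :
    ∫ x, ((2 - 2 * ((m:ℝ)+1) * (x i) ^ 2) ^ 2 -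
      2 * ((m:ℝ)+1) * (4 * (x i) ^ 2 - 4 * (x i) ^ 4)) ∂(sphS m) = 0 := by
  have e : ∀ x : Euc (m+1), (2 - 2 * ((m:ℝ)+1) * (x i) ^ 2) ^ 2 -
      2 * ((m:ℝ)+1) * (4 * (x i) ^ 2 - 4 * (x i) ^ 4) =
      4 * (1:ℝ) + (-16 * ((m:ℝ)+1)) * (x i)^2 + (4 * ((m:ℝ)+1) * ((m:ℝ)+3)) * (x i)^4 := by
    intro x; ring
  simp only [e]
  rw [integral_add (sphS_int (by fun_prop)) (sphS_int (by fun_prop)),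
    integral_add (sphS_int (by fun_prop)) (sphS_int (by fun_prop)),
    integral_const_mul, integral_const_mul, integral_const_mul, ← m2 i, m4 i]
  ring

lemma lastCoord_eq {m : ℕ} (x : Euc (m+1)) : lastCoord x = x (Fin.last m) := by
  simp [lastCoord]; rfl

lemma half_meas (m : ℕ) : MeasurableSet (halfSphere (m+1)) := by
  have : halfSphere (m+1) = {x | ‖x‖ = 1} ∩ {x | 0 < x (Fin.last m)} := by
    ext x; simp [halfSphere, lastCoord_eq]
  rw [this]
  exact (sphere_meas m).inter (isOpen_lt continuous_const (by fun_prop)).measurableSet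

lemma halfSph_subset (m : ℕ) : halfSphere (m+1) ⊆ {x | ‖x‖ = 1} := fun _ hx => hx.1

lemma half_eq {m : ℕ} {f : Euc (m+1) → ℝ} (hf : Continuous f) (he : ∀ x, f (-x) = f x) :
    ∫ x, f x ∂(sphS m) = 2 * ∫ x in halfSphere (m+1), f x ∂(sphMeasure (m+1)) := by
  have hres : (sphS m).restrict (halfSphere (m+1)) =
      (sphMeasure (m+1)).restrict (halfSphere (m+1)) := by
    rw [sphS, Measure.restrict_restrict (half_meas m), Set.inter_eq_left.2 (halfSph_subset m)]
  have h0 : ∀ᵐ x ∂(sphS m), x (Fin.last m) ≠ 0 := by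
    rw [sphS, ae_restrict_iff' (sphere_meas m), ae_iff]
    convert equator_null m using 2
    ext x; simp
  rw [← hres, ← integral_indicator (half_meas m)]
  have h1 := sphS_inv (LinearIsometryEquiv.neg ℝ) ((halfSphere (m+1)).indicator f)
  have hi : Integrable ((halfSphere (m+1)).indicator f) (sphS m) :=
    (sphS_int hf).indicator (half_meas m)
  have hmeas : MeasurableSet (Neg.neg ⁻¹' halfSphere (m+1)) :=
    measurable_neg (half_meas m)
  have hi2 : Integrable (fun x => (halfSphere (m+1)).indicator f (-x)) (sphS m) := by
    have : (fun x => (halfSphere (m+1)).indicator f (-x)) =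
        (Neg.neg ⁻¹' halfSphere (m+1)).indicator f := by
      ext x
      by_cases h : -x ∈ halfSphere (m+1)
      · rw [Set.indicator_of_mem h, Set.indicator_of_mem (show x ∈ Neg.neg ⁻¹' halfSphere (m+1) from h), he]
      · rw [Set.indicator_of_notMem h, Set.indicator_of_notMem (show x ∉ Neg.neg ⁻¹' halfSphere (m+1) from h)]
    rw [this]
    exact (sphS_int hf).indicator hmeas
  rw [two_mul]
  nth_rewrite 2 [← h1]
  simp only [LinearIsometryEquiv.coe_neg]
  rw [← integral_add hi hi2]
  apply integral_congr_ae
  filter_upwards [h0, sphS_ae m] with x hx hn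
  rcases lt_or_gt_of_ne hx with h | h
  · simp [Set.indicator, halfSphere, lastCoord_eq, hn, h, he, h.le]
  · simp [Set.indicator, halfSphere, lastCoord_eq, hn, h, h.le]

lemma v_hasFDeriv {m : ℕ} (y : Euc (m+1)) (hy : y ≠ 0) :
    HasFDerivAt (fun x : Euc (m+1) => (lastCoord x / ‖x‖) ^ 2)
      ((2 * y (Fin.last m) * (‖y‖^2)⁻¹) • innerSL ℝ (EuclideanSpace.single (Fin.last m) (1:ℝ)) -
       (2 * (y (Fin.last m))^2 * ((‖y‖^2)⁻¹)^2) • innerSL ℝ y) y := by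
  have hN : ‖y‖ ^ 2 ≠ 0 := by positivity
  have e : (fun x : Euc (m+1) => (lastCoord x / ‖x‖) ^ 2) =
      fun x => (inner ℝ (EuclideanSpace.single (Fin.last m) (1:ℝ)) x)^2 * (‖x‖^2)⁻¹ := by
    ext x; rw [lastCoord_eq, div_pow, div_eq_mul_inv]
    simp [EuclideanSpace.inner_single_left]
  rw [e]
  have hL := (innerSL ℝ (EuclideanSpace.single (Fin.last m) (1:ℝ) : Euc (m+1))).hasFDerivAt (x := y)
  have hsq := (hasStrictFDerivAt_norm_sq y).hasFDerivAt
  have hinv := (hasDerivAt_inv hN).comp_hasFDerivAt y hsq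
  have h := (hL.pow 2).mul hinv
  refine h.congr_fderiv ?_
  ext h
  simp [EuclideanSpace.inner_single_left]
  field_simp
  ring

lemma v_fderiv {m : ℕ} (y : Euc (m+1)) (hy : y ≠ 0) (h : Euc (m+1)) :
    fderiv ℝ (fun x : Euc (m+1) => (lastCoord x / ‖x‖) ^ 2) y h =
      2 * y (Fin.last m) * h (Fin.last m) * (‖y‖^2)⁻¹ -
        2 * (y (Fin.last m))^2 * inner ℝ h y * ((‖y‖^2)⁻¹)^2 := by
  rw [(v_hasFDeriv y hy).fderiv]
  simp [EuclideanSpace.inner_single_left, real_inner_comm]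
  ring

lemma v_grad {m : ℕ} (y : Euc (m+1)) (hy : ‖y‖ = 1) :
    ‖gradient (fun x : Euc (m+1) => (lastCoord x / ‖x‖) ^ 2) y‖ ^ 2 =
      4 * (y (Fin.last m))^2 - 4 * (y (Fin.last m))^4 := by
  have hy0 : y ≠ 0 := by rintro rfl; simp at hy
  have : gradient (fun x : Euc (m+1) => (lastCoord x / ‖x‖) ^ 2) y =
      (2 * y (Fin.last m)) • EuclideanSpace.single (Fin.last m) (1:ℝ) -
        (2 * (y (Fin.last m))^2) • y := by
    apply ext_inner_right ℝ
    intro h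
    rw [gradient, InnerProductSpace.toDual_symm_apply, v_fderiv y hy0, hy, inner_sub_left,
      real_inner_smul_left, real_inner_smul_left, EuclideanSpace.inner_single_left,
      real_inner_comm]
    simp
  rw [this, norm_sub_sq_real, norm_smul, norm_smul, hy, real_inner_smul_left,
    real_inner_smul_right, EuclideanSpace.inner_single_left, mul_pow, mul_pow]
  simp [sq_abs]
  ring_nf
  simp only [sq_abs]

lemma v_second {m : ℕ} (y : Euc (m+1)) (hy : ‖y‖ = 1) (h : Euc (m+1)) :
    fderiv ℝ (fun z => fderiv ℝ (fun x : Euc (m+1) => (lastCoord x / ‖x‖) ^ 2) z h) y h =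
      2 * (h (Fin.last m))^2 - 8 * y (Fin.last m) * h (Fin.last m) * inner ℝ h y
        - 2 * (y (Fin.last m))^2 * ‖h‖^2 + 8 * (y (Fin.last m))^2 * (inner ℝ h y)^2 := by
  have hy0 : y ≠ 0 := by rintro rfl; simp at hy
  have hN : ‖y‖ ^ 2 ≠ 0 := by positivity
  have hev : (fun z => fderiv ℝ (fun x : Euc (m+1) => (lastCoord x / ‖x‖) ^ 2) z h) =ᶠ[𝓝 y]
      fun z => 2 * h (Fin.last m) *
        (inner ℝ (EuclideanSpace.single (Fin.last m) (1:ℝ)) z * (‖z‖^2)⁻¹) -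
        2 * ((inner ℝ (EuclideanSpace.single (Fin.last m) (1:ℝ)) z)^2 *
          (inner ℝ h z * ((‖z‖^2)⁻¹)^2)) := by
    filter_upwards [isOpen_ne.mem_nhds hy0] with z hz
    rw [v_fderiv z hz]
    simp [EuclideanSpace.inner_single_left]
    ring
  rw [hev.fderiv_eq]
  have hL := (innerSL ℝ (EuclideanSpace.single (Fin.last m) (1:ℝ) : Euc (m+1))).hasFDerivAt (x := y)
  have hH := (innerSL ℝ h).hasFDerivAt (x := y)
  have hsq := (hasStrictFDerivAt_norm_sq y).hasFDerivAt
  have hinv := (hasDerivAt_inv hN).comp_hasFDerivAt y hsq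
  have H := ((hL.mul hinv).const_mul (2 * h (Fin.last m))).sub
    (((hL.pow 2).mul (hH.mul (hinv.pow 2))).const_mul 2)
  have H' := HasFDerivAt.fderiv H
  refine (congrArg (fun T => T h) H').trans ?_
  simp [EuclideanSpace.inner_single_left, hy, real_inner_comm]
  ring

lemma v_lap {m : ℕ} (y : Euc (m+1)) (hy : ‖y‖ = 1) :
    lap (fun x : Euc (m+1) => (lastCoord x / ‖x‖) ^ 2) y =
      2 - 2 * ((m:ℝ)+1) * (y (Fin.last m))^2 := by
  unfold lap
  simp only [v_second y hy]
  simp only [Finset.sum_add_distrib, Finset.sum_sub_distrib, EuclideanSpace.inner_single_left,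
    ← Finset.mul_sum]
  have h1 : ∀ i : Fin (m+1), (EuclideanSpace.single i (1:ℝ) : Euc (m+1)) (Fin.last m) =
      if i = Fin.last m then 1 else 0 := by
    intro i; simp [Pi.single_apply, eq_comm]
  simp only [h1]
  have h2 := sum_sq hy
  simp [mul_assoc, ← Finset.mul_sum, h2]
  ring

/-- Equality in the spectral inequality of Lemma 3.2.2 for `v = cos²θ`, i.e. for the
`0`-homogeneous function `x ↦ (x_n/|x|)²`:
`∫_{S^{n-1}_+} |δ_ω v|² dω = 2n ∫_{S^{n-1}_+} |∇_ω v|² dω`. -/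
theorem halfSphere_spectral_equality_cos_sq (n : ℕ) (hn : 2 ≤ n) :
    ∫ ω in halfSphere n, (lap (fun x : Euc n => (lastCoord x / ‖x‖) ^ 2) ω) ^ 2
        ∂(sphMeasure n) =
      2 * (n : ℝ) *
        ∫ ω in halfSphere n, ‖gradient (fun x : Euc n => (lastCoord x / ‖x‖) ^ 2) ω‖ ^ 2
          ∂(sphMeasure n) := by
  obtain ⟨m, rfl⟩ : ∃ m, n = m + 1 := ⟨n - 1, by omega⟩
  have e1 : Set.EqOn (fun ω => (lap (fun x : Euc (m+1) => (lastCoord x / ‖x‖) ^ 2) ω) ^ 2)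
      (fun x : Euc (m+1) => (2 - 2 * ((m:ℝ)+1) * (x (Fin.last m))^2)^2) (halfSphere (m+1)) :=
    fun x hx => by simp only [v_lap x hx.1]
  have e2 : Set.EqOn (fun ω => ‖gradient (fun x : Euc (m+1) => (lastCoord x / ‖x‖) ^ 2) ω‖ ^ 2)
      (fun x : Euc (m+1) => 4 * (x (Fin.last m))^2 - 4 * (x (Fin.last m))^4)
      (halfSphere (m+1)) := fun x hx => v_grad x hx.1
  rw [setIntegral_congr_fun (half_meas m) e1, setIntegral_congr_fun (half_meas m) e2]
  have hint : ∀ f : Euc (m+1) → ℝ, Continuous f →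
      IntegrableOn f (halfSphere (m+1)) (sphMeasure (m+1)) := fun f hf =>
    IntegrableOn.mono_set (show IntegrableOn f {x | ‖x‖ = 1} (sphMeasure (m+1)) from sphS_int hf)
      (halfSph_subset m)
  have h := total_zero (m := m) (Fin.last m)
  rw [half_eq (by fun_prop) (by intro x; simp only [PiLp.neg_apply]; ring),
    integral_sub (hint _ (by fun_prop)) (hint _ (by fun_prop)), integral_const_mul] at h
  push_cast
  linarith
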